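/- For every ε > 0 and every natural number N there exist a natural number n ≥ N and a spreading linear triple system F on an n-element set V with |F| < (5/36 + ε)·n². -/

import Mathlib

open Finset

variable {α : Type*}

/-- A pair of (distinct) vertices is covered if it lies in some triple of `F`. -/
def Covered [DecidableEq α] (F : Finset (Finset α)) (x y : α) : Prop :=
  ∃ T ∈ F, x ∈ T ∧ y ∈ T

instance [DecidableEq α] (F : Finset (Finset α)) (x y : α) : Decidable (Covered F x y) :=
  inferInstanceAs (Decidable (∃ T ∈ F, x ∈ T ∧ y ∈ T))

/-- Linear triple system on `V`. -/
def IsLinearTS [DecidableEq α] (V : Finset α) (F : Finset (Finset α)) : Prop :=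
  (∀ T ∈ F, T ⊆ V ∧ T.card = 3) ∧
    ∀ x ∈ V, ∀ y ∈ V, x ≠ y → (F.filter fun T => x ∈ T ∧ y ∈ T).card ≤ 1

/-- Steiner triple system on `V`. -/
def IsSTS [DecidableEq α] (V : Finset α) (F : Finset (Finset α)) : Prop :=
  (∀ T ∈ F, T ⊆ V ∧ T.card = 3) ∧
    ∀ x ∈ V, ∀ y ∈ V, x ≠ y → (F.filter fun T => x ∈ T ∧ y ∈ T).card = 1

/-- Neighbourhood of `V'` with respect to the triple system `F` on `V`. -/
def nbhd [DecidableEq α] (V : Finset α) (F : Finset (Finset α)) (V' : Finset α) : Finset α :=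
  (V \ V').filter fun z => ∃ x ∈ V', ∃ y ∈ V', x ≠ y ∧ ({x, y, z} : Finset α) ∈ F

/-- `F` is spreading: the closure of every nontrivial subset is `V`. -/
def IsSpreading [DecidableEq α] (V : Finset α) (F : Finset (Finset α)) : Prop :=
  ∀ V' ⊆ V, 3 ≤ V'.card → V' ∉ F →
    ∀ W, V' ⊆ W → W ⊆ V → nbhd V F W = ∅ → W = V

/-- `F` is weakly spreading. -/
def IsWeaklySpreading [DecidableEq α] (V : Finset α) (F : Finset (Finset α)) : Prop :=
  ∀ F' ⊆ F, 2 ≤ F'.card →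
    ∀ W, F'.biUnion id ⊆ W → W ⊆ V → nbhd V F W = ∅ → W = V

/-- `Val(T)`: number of private neighbours of the triple `T`. -/
def valT [DecidableEq α] (V : Finset α) (F : Finset (Finset α)) (T : Finset α) : ℕ :=
  ((V \ T).filter fun v => (T.filter fun t => Covered F v t).card = 1).card

/-- Two triples are adjacent if pairs of each span a `C₄` in the complement of the skeleton. -/
def AdjT [DecidableEq α] (F : Finset (Finset α)) (T T' : Finset α) : Prop :=
  ∃ v₁ ∈ T, ∃ v₂ ∈ T, ∃ u₁ ∈ T', ∃ u₂ ∈ T',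
    v₁ ≠ v₂ ∧ u₁ ≠ u₂ ∧ v₁ ≠ u₁ ∧ v₁ ≠ u₂ ∧ v₂ ≠ u₁ ∧ v₂ ≠ u₂ ∧
    ¬Covered F v₁ u₁ ∧ ¬Covered F u₁ v₂ ∧ ¬Covered F v₂ u₂ ∧ ¬Covered F u₂ v₁

instance [DecidableEq α] (F : Finset (Finset α)) (T T' : Finset α) : Decidable (AdjT F T T') :=
  inferInstanceAs (Decidable (∃ v₁ ∈ T, ∃ v₂ ∈ T, ∃ u₁ ∈ T', ∃ u₂ ∈ T',
    v₁ ≠ v₂ ∧ u₁ ≠ u₂ ∧ v₁ ≠ u₁ ∧ v₁ ≠ u₂ ∧ v₂ ≠ u₁ ∧ v₂ ≠ u₂ ∧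
    ¬Covered F v₁ u₁ ∧ ¬Covered F u₁ v₂ ∧ ¬Covered F v₂ u₂ ∧ ¬Covered F u₂ v₁))

/-!
Take six cyclically ordered copies (classes) of `K = 𝔽_p` and one apex point, `n = 6p + 1` points
in all, with three kinds of triples: two points `x ≠ y` of a class together with the point `x + y`
of the next class; one point in each of three alternate classes, the three points having a fixed
sum; the apex with `x` in an even class and `2x` in the next. There are `3(p² - p) + 2p² + 3p = 5p²`
of them.

A subspace with two points `x ≠ x'` in one class and a point in another class of the same parity
contains, by going back and forth along transversal triples, all translates of that point by
multiples of `x - x'`, hence a whole class; since `2 ≠ 0`, the sum triples then fill one class after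
another. So a proper subspace with two points in a class is contained in a single sum triple. If it
has at most one point per class but meets two classes of the same parity, it is contained in a
transversal triple: the apex, or a point of the other parity, would force a second transversal
triple that is the double of the first, which is impossible because the prescribed sums are `0` for
even and `1` for odd classes. What remains lies in a triple through the apex or has at most two
points.
-/

section TripleSystem

variable {β : Type*} [DecidableEq α] [DecidableEq β] {V W : Finset α} {F : Finset (Finset α)}

/-- A subspace of a triple system is a set of points containing every triple that it meets in at
least two points. In a linear triple system on `V`, the subspaces inside `V` are the sets with
empty neighbourhood. -/
def IsSubspace (F : Finset (Finset α)) (W : Finset α) : Prop :=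
  ∀ T ∈ F, ∀ x ∈ T, ∀ y ∈ T, x ≠ y → x ∈ W → y ∈ W → T ⊆ W

lemma isSubspace_of_nbhd_eq_empty (hF : ∀ T ∈ F, T ⊆ V ∧ #T = 3) (hW : nbhd V F W = ∅) :
    IsSubspace F W := by
  intro T hT x hx y hy hxy hxW hyW z hz
  by_contra hzW
  have hT_eq : {x, y, z} = T := by
    refine eq_of_subset_of_card_le (by simp [insert_subset_iff, hx, hy, hz]) ?_
    rw [(hF T hT).2, card_eq_three.mpr ⟨x, y, z, hxy, ?_, ?_, rfl⟩] <;>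
      (rintro rfl; contradiction)
  have hz_nbhd : z ∈ nbhd V F W := mem_filter.mpr
    ⟨mem_sdiff.mpr ⟨(hF T hT).1 hz, hzW⟩, x, hxW, y, hyW, hxy, hT_eq ▸ hT⟩
  simp [hW] at hz_nbhd

lemma isSpreading_of_forall_isSubspace (hF : ∀ T ∈ F, T ⊆ V ∧ #T = 3)
    (h : ∀ W ⊆ V, IsSubspace F W → 3 ≤ #W → W ∉ F → W = V) : IsSpreading V F := by
  intro V' _ hcard hV' W hV'W hWV hW
  refine h W hWV (isSubspace_of_nbhd_eq_empty hF hW) (hcard.trans (card_le_card hV'W)) ?_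
  intro hWF
  exact hV' (eq_of_subset_of_card_le hV'W ((hF W hWF).2.trans_le hcard) ▸ hWF)

lemma triple_eq_of_third {t : α → α → α} {a b c : α} (hab : t a b = c) (hba : t b a = c)
    (hac : t a c = b) (hca : t c a = b) (hbc : t b c = a) (hcb : t c b = a) :
    ∀ u ∈ ({a, b, c} : Finset α), ∀ v ∈ ({a, b, c} : Finset α), u ≠ v →
      ({a, b, c} : Finset α) = {u, v, t u v} := by
  grind

lemma isLinearTS_of_third (t : α → α → α) (hF : ∀ T ∈ F, T ⊆ V ∧ #T = 3)
    (ht : ∀ T ∈ F, ∀ u ∈ T, ∀ v ∈ T, u ≠ v → T = {u, v, t u v}) : IsLinearTS V F := by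
  refine ⟨hF, fun u _ v _ huv => card_le_one.mpr fun T hT T' hT' => ?_⟩
  obtain ⟨hTF, huT, hvT⟩ := mem_filter.mp hT
  obtain ⟨hTF', huT', hvT'⟩ := mem_filter.mp hT'
  rw [ht T hTF u huT v hvT huv, ht T' hTF' u huT' v hvT' huv]

lemma IsLinearTS.map (h : IsLinearTS V F) (e : α ↪ β) :
    IsLinearTS (V.map e) (F.map (mapEmbedding e).toEmbedding) := by
  refine ⟨?_, ?_⟩
  · simpa [mapEmbedding_apply] using h.1
  · simp only [forall_mem_map, e.injective.ne_iff]
    intro x hx y hy hxy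
    simpa [filter_map, Function.comp_def, mapEmbedding_apply] using h.2 x hx y hy hxy

lemma nbhd_map (e : α ↪ β) :
    nbhd (V.map e) (F.map (mapEmbedding e).toEmbedding) (W.map e) = (nbhd V F W).map e := by
  have h_triple (x y z : α) :
      ({e x, e y, e z} : Finset β) ∈ F.map (mapEmbedding e).toEmbedding ↔ {x, y, z} ∈ F := by
    rw [← mem_map' (mapEmbedding e).toEmbedding]
    simp [mapEmbedding_apply]
  ext z
  simp only [nbhd, mem_filter, mem_sdiff, mem_map]
  grind [e.injective]

lemma IsSpreading.map (h : IsSpreading V F) (e : α ↪ β) :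
    IsSpreading (V.map e) (F.map (mapEmbedding e).toEmbedding) := by
  intro V' hV' hcard hV'F W hV'W hWV hW
  obtain ⟨A, hAV, rfl⟩ := subset_map_iff.mp hV'
  obtain ⟨B, hBV, rfl⟩ := subset_map_iff.mp hWV
  rw [nbhd_map, map_eq_empty] at hW
  rw [card_map] at hcard
  have hAF : A ∉ F := fun hA => hV'F (mem_map_of_mem (mapEmbedding e).toEmbedding hA)
  rw [h A hAV hcard hAF B (map_subset_map.mp hV'W) hBV hW]

end TripleSystem

lemma forall_of_zmultiples_eq_top {A : Type*} [AddGroup A] [Finite A] {d : A}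
    (hd : AddSubgroup.zmultiples d = ⊤) {P : A → Prop} {a : A} (ha : P a)
    (hadd : ∀ b, P b → P (b + d)) (b : A) : P b := by
  have hn (n : ℕ) : P (a + n • d) := by
    induction n with
    | zero => simpa using ha
    | succ n ih => simpa [succ_nsmul, add_assoc] using hadd _ ih
  have hb : -a + b ∈ AddSubgroup.zmultiples d := hd ▸ AddSubgroup.mem_top _
  obtain ⟨n, hnd⟩ := mem_multiples_iff_mem_zmultiples.mpr hb
  simpa [show n • d = -a + b from hnd] using hn n

section HexSystem

/-- The points of the construction: six copies `{some (i, x) | x : K}` of `K`, called classes and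
indexed cyclically by `i : ZMod 6`, and one extra point `none`, the apex. -/
abbrev HexPoint (K : Type*) := Option (ZMod 6 × K)

lemma card_hexPoint (K : Type*) [Fintype K] :
    Fintype.card (HexPoint K) = 6 * Fintype.card K + 1 := by
  simp [ZMod.card]

/-- `MeetsClassesOnce W` says that `W` has at most one point in each class. -/
def MeetsClassesOnce {K : Type*} (W : Finset (HexPoint K)) : Prop :=
  ∀ i x y, some (i, x) ∈ W → some (i, y) ∈ W → x = y

/-- `MeetsParitiesOnce W` says that `W` has at most one point in the classes of even index, and at
most one in those of odd index. -/
def MeetsParitiesOnce {K : Type*} (W : Finset (HexPoint K)) : Prop :=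
  ∀ i j x y, (Even i.val ↔ Even j.val) → some (i, x) ∈ W → some (j, y) ∈ W → (i, x) = (j, y)

lemma zmod_six_cases (i k : ZMod 6) :
    k = i ∨ k = i + 1 ∨ k = i + 2 ∨ k = i + 3 ∨ k = i + 4 ∨ k = i + 5 := by
  decide +revert

lemma even_val_add_one (i : ZMod 6) : Even (i + 1).val ↔ ¬Even i.val := by
  decide +revert

lemma even_val_add_two (i : ZMod 6) : Even (i + 2).val ↔ Even i.val := by
  decide +revert

lemma even_val_add_four (i : ZMod 6) : Even (i + 4).val ↔ Even i.val := by
  decide +revert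

lemma even_val_add_five (i : ZMod 6) : Even (i + 5).val ↔ ¬Even i.val := by
  decide +revert

lemma eq_or_eq_add_two_of_even_val_iff {i j : ZMod 6} (hij : Even i.val ↔ Even j.val) :
    j = i ∨ j = i + 2 ∨ i = j + 2 := by
  decide +revert

lemma MeetsClassesOnce.meetsParitiesOnce {K : Type*} {W : Finset (HexPoint K)}
    (hclass : MeetsClassesOnce W) (hsep : ∀ i x y, some (i, x) ∈ W → some (i + 2, y) ∉ W) :
    MeetsParitiesOnce W := by
  intro i j x y hij hx hy
  rcases eq_or_eq_add_two_of_even_val_iff hij with rfl | rfl | rfl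
  · rw [hclass j x y hx hy]
  · exact absurd hy (hsep i x y hx)
  · exact absurd hx (hsep j y x hy)

lemma MeetsParitiesOnce.card_le_two {K : Type*} {W : Finset (HexPoint K)}
    (hparity : MeetsParitiesOnce W) (hnone : none ∉ W) : #W ≤ 2 := by
  let parity (u : HexPoint K) : Bool := u.elim false fun q => decide (Even q.1.val)
  refine card_le_card_of_injOn parity (t := univ) (fun _ _ => mem_coe.mpr (mem_univ _)) ?_
  rintro (_ | ⟨i, x⟩) hx (_ | ⟨j, y⟩) hy hxy
  · rfl
  · contradiction
  · contradiction
  · exact congrArg some (hparity i j x y (by simpa [parity] using hxy) hx hy)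

variable {K : Type*} [Field K]

variable (K) in
/-- The sum of the three coordinates of a transversal triple on the classes of the parity of `i`.
The two parities get different sums, so that the triples through the apex do not map transversal
triples to transversal triples. -/
def hexOffset (i : ZMod 6) : K := if Even i.val then 0 else 1

/-- The third point of the triple through two points of `HexPoint K`. The value is junk for two
equal points and for two points that lie in no common triple. -/
def hexThird [DecidableEq K] : HexPoint K → HexPoint K → HexPoint K
  | none, none => none
  | none, some (i, x) | some (i, x), none =>
    if Even i.val then some (i + 1, 2 * x) else some (i - 1, x / 2)
  | some (i, x), some (j, y) =>
    if j = i then some (i + 1, x + y)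
    else if j = i + 1 then if y = 2 * x then none else some (i, y - x)
    else if i = j + 1 then if x = 2 * y then none else some (j, x - y)
    else some (2 * i - j, hexOffset K i - x - y)

@[simp]
lemma hexOffset_add_two (i : ZMod 6) : hexOffset K (i + 2) = hexOffset K i := by
  simp only [hexOffset, even_val_add_two]

@[simp]
lemma hexOffset_add_four (i : ZMod 6) : hexOffset K (i + 4) = hexOffset K i := by
  simp only [hexOffset, even_val_add_four]

variable [DecidableEq K]

/-- The triples with two points in one class: the third point is their sum in the next class. -/
def sumTriple (i : ZMod 6) (x y : K) : Finset (HexPoint K) :=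
  {some (i, x), some (i, y), some (i + 1, x + y)}

/-- The triples with one point in each of the three classes of the same parity. -/
def transversalTriple (i : ZMod 6) (x y : K) : Finset (HexPoint K) :=
  {some (i, x), some (i + 2, y), some (i + 4, hexOffset K i - x - y)}

/-- The triples through the apex. They cover, for even `i`, the pairs between classes `i` and
`i + 1` that are covered by no `sumTriple`. -/
def apexTriple (i : ZMod 6) (x : K) : Finset (HexPoint K) :=
  {none, some (i, x), some (i + 1, 2 * x)}

lemma card_sumTriple {x y : K} (hxy : x ≠ y) (i : ZMod 6) : #(sumTriple i x y) = 3 :=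
  card_eq_three.mpr ⟨_, _, _, by simpa, by grind, by grind, rfl⟩

lemma card_transversalTriple (i : ZMod 6) (x y : K) : #(transversalTriple i x y) = 3 :=
  card_eq_three.mpr ⟨_, _, _, by grind, by grind, by grind, rfl⟩

lemma card_apexTriple (i : ZMod 6) (x : K) : #(apexTriple i x) = 3 :=
  card_eq_three.mpr ⟨_, _, _, by simp, by simp, by grind, rfl⟩

lemma sumTriple_comm (i : ZMod 6) (x y : K) : sumTriple i x y = sumTriple i y x := by
  rw [sumTriple, sumTriple, insert_comm, add_comm x y]

lemma transversalTriple_rotate (i : ZMod 6) (x y : K) :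
    transversalTriple (i + 2) y (hexOffset K i - x - y) = transversalTriple i x y := by
  have h₄ : i + 2 + 2 = i + 4 := by grind
  have h₆ : i + 2 + 4 = i := by grind
  have hx : hexOffset K i - y - (hexOffset K i - x - y) = x := by ring
  ext u
  simp only [transversalTriple, hexOffset_add_two, h₄, h₆, hx, mem_insert, mem_singleton]
  tauto

lemma sumTriple_eq_of_hexThird {x y : K} (hxy : x ≠ y) (i : ZMod 6) :
    ∀ u ∈ sumTriple i x y, ∀ v ∈ sumTriple i x y, u ≠ v →
      sumTriple i x y = {u, v, hexThird u v} := by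
  have hx : x + y ≠ 2 * x := by grind
  have hy : x + y ≠ 2 * y := by grind
  have hi₁ : i ≠ i + 1 := by grind
  have hi₂ : i ≠ i + 1 + 1 := by grind
  apply triple_eq_of_third <;> simp [hexThird, hx, hy, hi₁, hi₁.symm, hi₂, add_comm y x]

lemma transversalTriple_eq_of_hexThird (i : ZMod 6) (x y : K) :
    ∀ u ∈ transversalTriple i x y, ∀ v ∈ transversalTriple i x y, u ≠ v →
      transversalTriple i x y = {u, v, hexThird u v} := by
  apply triple_eq_of_third <;> simp only [hexThird, hexOffset_add_two, hexOffset_add_four] <;>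
    split_ifs <;> congr 2 <;> grind

lemma apexTriple_eq_of_hexThird [NeZero (2 : K)] {i : ZMod 6} (hi : Even i.val) (x : K) :
    ∀ u ∈ apexTriple i x, ∀ v ∈ apexTriple i x, u ≠ v →
      apexTriple i x = {u, v, hexThird u v} := by
  have hi₁ : i + 1 ≠ i := by grind
  have hi₂ : i ≠ i + 1 + 1 := by grind
  have hx : 2 * x / 2 = x := mul_div_cancel_left₀ x two_ne_zero
  apply triple_eq_of_third <;> simp [hexThird, even_val_add_one, hi, hi₁, hi₁.symm, hi₂, hx]

variable [Fintype K]

variable (K) in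
/-- The spreading triple system on the `6 |K| + 1` points of `HexPoint K`. -/
def hexSystem : Finset (Finset (HexPoint K)) :=
  ((univ : Finset (ZMod 6)) ×ˢ (univ : Finset K).offDiag).image
      (fun q => sumTriple q.1 q.2.1 q.2.2) ∪
    (({0, 1} : Finset (ZMod 6)) ×ˢ (univ : Finset (K × K))).image
      (fun q => transversalTriple q.1 q.2.1 q.2.2) ∪
    (({i | Even i.val} : Finset (ZMod 6)) ×ˢ (univ : Finset K)).image
      (fun q => apexTriple q.1 q.2)

lemma sumTriple_mem_hexSystem {x y : K} (hxy : x ≠ y) (i : ZMod 6) :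
    sumTriple i x y ∈ hexSystem K := by
  simp only [hexSystem, mem_union, mem_image]
  exact .inl (.inl ⟨(i, x, y), by simpa, rfl⟩)

lemma transversalTriple_mem_hexSystem (i : ZMod 6) (x y : K) :
    transversalTriple i x y ∈ hexSystem K := by
  have hbase {j : ZMod 6} (hj : j = 0 ∨ j = 1) (x y : K) :
      transversalTriple j x y ∈ hexSystem K := by
    simp only [hexSystem, mem_union, mem_image]
    exact .inl (.inr ⟨(j, x, y), by simpa, rfl⟩)
  have hi : (i = 0 ∨ i = 1) ∨ (i + 2 = 0 ∨ i + 2 = 1) ∨ (i + 2 + 2 = 0 ∨ i + 2 + 2 = 1) := by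
    decide +revert
  rcases hi with hi | hi | hi
  · exact hbase hi x y
  · rw [← transversalTriple_rotate]
    exact hbase hi _ _
  · rw [← transversalTriple_rotate, ← transversalTriple_rotate]
    exact hbase hi _ _

lemma apexTriple_mem_hexSystem {i : ZMod 6} (hi : Even i.val) (x : K) :
    apexTriple i x ∈ hexSystem K := by
  simp only [hexSystem, mem_union, mem_image]
  exact .inr ⟨(i, x), by simpa, rfl⟩

lemma hexSystem_cases {p : Finset (HexPoint K) → Prop}
    (hsum : ∀ i x y, x ≠ y → p (sumTriple i x y))
    (htransversal : ∀ i x y, p (transversalTriple i x y))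
    (hapex : ∀ i x, Even i.val → p (apexTriple i x)) : ∀ T ∈ hexSystem K, p T := by
  intro T hT
  simp only [hexSystem, mem_union, mem_image, mem_product, mem_offDiag, mem_filter] at hT
  rcases hT with (⟨⟨i, x, y⟩, ⟨-, -, -, hxy⟩, rfl⟩ | ⟨⟨i, x, y⟩, -, rfl⟩) |
    ⟨⟨i, x⟩, ⟨⟨-, hi⟩, -⟩, rfl⟩
  · exact hsum i x y hxy
  · exact htransversal i x y
  · exact hapex i x hi

lemma card_image_sumTriple_le :
    2 * #(((univ : Finset (ZMod 6)) ×ˢ (univ : Finset K).offDiag).image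
        fun q => sumTriple q.1 q.2.1 q.2.2) ≤
      6 * (Fintype.card K ^ 2 - Fintype.card K) := by
  refine (mul_card_image_le_card _ 2 ?_).trans_eq ?_
  · intro T hT
    obtain ⟨⟨i, x, y⟩, hxy, rfl⟩ := mem_image.mp hT
    replace hxy : x ≠ y := by simpa using hxy
    refine one_lt_card.mpr ⟨(i, x, y), by simpa, (i, y, x), ?_, by simp [hxy]⟩
    simpa [hxy.symm] using sumTriple_comm i y x
  · simp [card_product, offDiag_card, ZMod.card, sq]

lemma card_hexSystem_le : #(hexSystem K) ≤ 5 * Fintype.card K ^ 2 := by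
  have hsum := card_image_sumTriple_le (K := K)
  have htransversal : #((({0, 1} : Finset (ZMod 6)) ×ˢ (univ : Finset (K × K))).image
      fun q => transversalTriple q.1 q.2.1 q.2.2) ≤ 2 * Fintype.card K ^ 2 :=
    card_image_le.trans_eq (by
      rw [card_product, card_univ, Fintype.card_prod, sq,
        show #({0, 1} : Finset (ZMod 6)) = 2 by decide])
  have hapex : #((({i | Even i.val} : Finset (ZMod 6)) ×ˢ (univ : Finset K)).image
      fun q => apexTriple q.1 q.2) ≤ 3 * Fintype.card K :=
    card_image_le.trans_eq (by
      rw [card_product, card_univ, show #({i | Even i.val} : Finset (ZMod 6)) = 3 by decide])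
  have hsq : Fintype.card K ≤ Fintype.card K ^ 2 := Nat.le_self_pow two_ne_zero _
  rw [hexSystem]
  grind [card_union_le]

lemma card_of_mem_hexSystem : ∀ T ∈ hexSystem K, #T = 3 :=
  hexSystem_cases (fun i _ _ hxy => card_sumTriple hxy i) card_transversalTriple
    fun i x _ => card_apexTriple i x

theorem isLinearTS_hexSystem [NeZero (2 : K)] : IsLinearTS univ (hexSystem K) :=
  isLinearTS_of_third hexThird (fun T hT => ⟨subset_univ T, card_of_mem_hexSystem T hT⟩) <|
    hexSystem_cases (fun i _ _ hxy => sumTriple_eq_of_hexThird hxy i)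
      transversalTriple_eq_of_hexThird fun _ x hi => apexTriple_eq_of_hexThird hi x

namespace IsSubspace

variable {W : Finset (HexPoint K)} {i : ZMod 6} {x y : K}

lemma some_add_mem (h : IsSubspace (hexSystem K) W) (hxy : x ≠ y) (hx : some (i, x) ∈ W)
    (hy : some (i, y) ∈ W) : some (i + 1, x + y) ∈ W :=
  h _ (sumTriple_mem_hexSystem hxy i) (some (i, x)) (by simp [sumTriple])
    (some (i, y)) (by simp [sumTriple]) (by simpa) hx hy (by simp [sumTriple])

lemma some_sub_mem (h : IsSubspace (hexSystem K) W) (hyx : y ≠ 2 * x) (hx : some (i, x) ∈ W)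
    (hy : some (i + 1, y) ∈ W) : some (i, y - x) ∈ W :=
  h _ (sumTriple_mem_hexSystem (show x ≠ y - x by grind) i) (some (i, x)) (by simp [sumTriple])
    (some (i + 1, y)) (by simp [sumTriple]) (by grind) hx hy (by simp [sumTriple])

lemma add_four_mem (h : IsSubspace (hexSystem K) W) (hx : some (i, x) ∈ W)
    (hy : some (i + 2, y) ∈ W) : some (i + 4, hexOffset K i - x - y) ∈ W :=
  h _ (transversalTriple_mem_hexSystem i x y) (some (i, x)) (by simp [transversalTriple])
    (some (i + 2, y)) (by simp [transversalTriple]) (by grind) hx hy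
    (by simp [transversalTriple])

lemma add_two_mem (h : IsSubspace (hexSystem K) W) (hx : some (i, x) ∈ W)
    (hy : some (i + 4, y) ∈ W) : some (i + 2, hexOffset K i - x - y) ∈ W := by
  have hx' : some (i + 4 + 2, x) ∈ W := by convert hx using 3; grind
  convert h.add_four_mem hy hx' using 3
  · grind
  · rw [hexOffset_add_four]; ring

lemma none_mem (h : IsSubspace (hexSystem K) W) (hi : Even i.val) (hx : some (i, x) ∈ W)
    (hx' : some (i + 1, 2 * x) ∈ W) : none ∈ W :=
  h _ (apexTriple_mem_hexSystem hi x) (some (i, x)) (by simp [apexTriple])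
    (some (i + 1, 2 * x)) (by simp [apexTriple]) (by grind) hx hx' (by simp [apexTriple])

lemma two_mul_mem (h : IsSubspace (hexSystem K) W) (hi : Even i.val) (hnone : none ∈ W)
    (hx : some (i, x) ∈ W) : some (i + 1, 2 * x) ∈ W :=
  h _ (apexTriple_mem_hexSystem hi x) none (by simp [apexTriple])
    (some (i, x)) (by simp [apexTriple]) (by simp) hnone hx (by simp [apexTriple])

lemma eq_two_mul (h : IsSubspace (hexSystem K) W) (hclass : MeetsClassesOnce W)
    (hx : some (i, x) ∈ W) (hy : some (i + 1, y) ∈ W) : y = 2 * x := by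
  by_contra hne
  grind [hclass i x (y - x) hx (h.some_sub_mem hne hx hy)]

lemma none_mem_of_add_one (h : IsSubspace (hexSystem K) W) (hclass : MeetsClassesOnce W)
    (hi : Even i.val) (hx : some (i, x) ∈ W) (hy : some (i + 1, y) ∈ W) : none ∈ W :=
  h.none_mem hi hx (h.eq_two_mul hclass hx hy ▸ hy)

lemma none_notMem_of_even (h : IsSubspace (hexSystem K) W) (hclass : MeetsClassesOnce W)
    (hi : Even i.val) (hx : some (i, x) ∈ W) (hy : some (i + 2, y) ∈ W) : none ∉ W := by
  intro hnone
  have hx' := h.two_mul_mem hi hnone hx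
  have hy' := h.two_mul_mem ((even_val_add_two i).mpr hi) hnone hy
  have hz' := h.two_mul_mem ((even_val_add_four i).mpr hi) hnone (h.add_four_mem hx hy)
  rw [show i + 2 + 1 = i + 1 + 2 by grind] at hy'
  rw [show i + 4 + 1 = i + 1 + 4 by grind] at hz'
  have hz_eq := hclass _ _ _ hz' (h.add_four_mem hx' hy')
  have hi' : ¬Even (i + 1).val := by simpa [even_val_add_one]
  simp only [hexOffset, if_pos hi, if_neg hi'] at hz_eq
  exact one_ne_zero (α := K) (by linear_combination -hz_eq)

lemma subset_apexTriple (h : IsSubspace (hexSystem K) W) (hparity : MeetsParitiesOnce W)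
    (hi : Even i.val) (hnone : none ∈ W) (hx : some (i, x) ∈ W) : W ⊆ apexTriple i x := by
  have hx' : some (i + 1, 2 * x) ∈ W := h.two_mul_mem hi hnone hx
  rintro (_ | ⟨k, z⟩) hz
  · simp [apexTriple]
  by_cases hk : Even k.val
  · simp [apexTriple, hparity k i z x (by tauto) hz hx]
  · simp [apexTriple, hparity k (i + 1) z (2 * x) (by grind [even_val_add_one]) hz hx']

variable [NeZero (2 : K)]

lemma half_mem (h : IsSubspace (hexSystem K) W) (hi : Even i.val) (hnone : none ∈ W)
    (hx : some (i + 1, x) ∈ W) : some (i, x / 2) ∈ W := by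
  refine h _ (apexTriple_mem_hexSystem hi (x / 2)) none (by simp [apexTriple])
    (some (i + 1, x)) ?_ (by simp) hnone hx (by simp [apexTriple])
  simp [apexTriple, mul_div_cancel₀ x two_ne_zero]

lemma eq_univ_of_class_subset (h : IsSubspace (hexSystem K) W) (hi : ∀ x, some (i, x) ∈ W) :
    W = univ := by
  have hstep (j : ZMod 6) (hj : ∀ x, some (j, x) ∈ W) (x : K) : some (j + 1, x) ∈ W := by
    have h2 : (2 : K) ≠ 0 := two_ne_zero
    have hsum := h.some_add_mem (x := x / 2 + 1) (y := x / 2 - 1) (by grind) (hj _) (hj _)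
    convert hsum using 3
    grind
  have hgen : AddSubgroup.zmultiples (1 : ZMod 6) = ⊤ :=
    (AddSubgroup.eq_top_iff' _).mpr fun k => ⟨k.val, by simp⟩
  have hall : ∀ j x, some (j, x) ∈ W := forall_of_zmultiples_eq_top hgen hi hstep
  refine eq_univ_of_forall ?_
  rintro (_ | ⟨j, x⟩)
  · exact h.none_mem (i := 0) (x := 0) (by decide) (hall _ _) (hall _ _)
  · exact hall j x

lemma eq_univ_of_add_two [IsSimpleAddGroup K] (h : IsSubspace (hexSystem K) W) {x' : K}
    (hxx' : x ≠ x') (hx : some (i, x) ∈ W) (hx' : some (i, x') ∈ W) (hy : some (i + 2, y) ∈ W) :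
    W = univ := by
  -- Two transversal triples through the class `i + 4` translate the class `i + 2` by `x - x'`.
  have hstep (z : K) (hz : some (i + 2, z) ∈ W) : some (i + 2, z + (x - x')) ∈ W := by
    convert h.add_two_mem hx' (h.add_four_mem hx hz) using 3
    ring
  have hgen : AddSubgroup.zmultiples (x - x') = ⊤ :=
    (IsSimpleAddGroup.eq_bot_or_eq_top_of_normal _ inferInstance).resolve_left
      (AddSubgroup.zmultiples_ne_bot.mpr (sub_ne_zero.mpr hxx'))
  exact h.eq_univ_of_class_subset (forall_of_zmultiples_eq_top hgen hy hstep)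

lemma eq_univ_of_add_four [IsSimpleAddGroup K] (h : IsSubspace (hexSystem K) W) {x' : K}
    (hxx' : x ≠ x') (hx : some (i, x) ∈ W) (hx' : some (i, x') ∈ W) (hy : some (i + 4, y) ∈ W) :
    W = univ :=
  h.eq_univ_of_add_two hxx' hx hx' (h.add_two_mem hx hy)

lemma eq_add_of_add_one_mem [IsSimpleAddGroup K] (h : IsSubspace (hexSystem K) W) (hW : W ≠ univ)
    (hxy : x ≠ y) (hx : some (i, x) ∈ W) (hy : some (i, y) ∈ W) {z : K}
    (hz : some (i + 1, z) ∈ W) : z = x + y := by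
  by_contra hne
  have hmem := h.some_add_mem hne hz (h.some_add_mem hxy hx hy)
  rw [show i + 1 + 1 = i + 2 by grind] at hmem
  exact hW (h.eq_univ_of_add_two hxy hx hy hmem)

lemma add_five_notMem [IsSimpleAddGroup K] (h : IsSubspace (hexSystem K) W) (hW : W ≠ univ)
    (hxy : x ≠ y) (hx : some (i, x) ∈ W) (hy : some (i, y) ∈ W) (z : K) :
    some (i + 5, z) ∉ W := by
  intro hz
  obtain ⟨t, ht, htz⟩ : ∃ t, some (i, t) ∈ W ∧ t ≠ 2 * z := by grind
  have hdiff := h.some_sub_mem htz hz (by rwa [show i + 5 + 1 = i by grind])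
  refine hW (h.eq_univ_of_add_two (show z ≠ t - z by grind) hz hdiff (y := x + y) ?_)
  rw [show i + 5 + 2 = i + 1 by grind]
  exact h.some_add_mem hxy hx hy

lemma none_notMem_of_ne [IsSimpleAddGroup K] (h : IsSubspace (hexSystem K) W) (hW : W ≠ univ)
    (hxy : x ≠ y) (hx : some (i, x) ∈ W) (hy : some (i, y) ∈ W) : none ∉ W := by
  intro hnone
  by_cases hi : Even i.val
  · have h_two_mul : 2 * x = 2 * y :=
      (h.eq_add_of_add_one_mem hW hxy hx hy (h.two_mul_mem hi hnone hx)).trans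
        (h.eq_add_of_add_one_mem hW hxy hx hy (h.two_mul_mem hi hnone hy)).symm
    exact hxy (mul_left_cancel₀ two_ne_zero h_two_mul)
  · refine h.add_five_notMem hW hxy hx hy (x / 2) ?_
    exact h.half_mem ((even_val_add_five i).mpr hi) hnone (by rwa [show i + 5 + 1 = i by grind])

lemma subset_sumTriple [IsSimpleAddGroup K] (h : IsSubspace (hexSystem K) W) (hW : W ≠ univ)
    (hxy : x ≠ y) (hx : some (i, x) ∈ W) (hy : some (i, y) ∈ W) : W ⊆ sumTriple i x y := by
  have hnext (z : K) : some (i + 1, z) ∈ W → z = x + y := h.eq_add_of_add_one_mem hW hxy hx hy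
  have hsame (z : K) (hz : some (i, z) ∈ W) : z = x ∨ z = y := by
    by_contra! hne
    exact hne.2 (by grind [hnext _ (h.some_add_mem hne.1 hz hx)])
  have hnot₂ (z : K) : some (i + 2, z) ∉ W := fun hz => hW (h.eq_univ_of_add_two hxy hx hy hz)
  have hnot₄ (z : K) : some (i + 4, z) ∉ W := fun hz => hW (h.eq_univ_of_add_four hxy hx hy hz)
  have hnot₅ : ∀ z, some (i + 5, z) ∉ W := h.add_five_notMem hW hxy hx hy
  have hnot₃ (z : K) : some (i + 3, z) ∉ W := by
    intro hz
    have hmem := h.add_four_mem (h.some_add_mem hxy hx hy) (y := z)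
      (by rwa [show i + 1 + 2 = i + 3 by grind])
    rw [show i + 1 + 4 = i + 5 by grind] at hmem
    exact hnot₅ _ hmem
  have hnone : none ∉ W := h.none_notMem_of_ne hW hxy hx hy
  rintro (_ | ⟨k, z⟩) hz
  · contradiction
  · rcases zmod_six_cases i k with rfl | rfl | rfl | rfl | rfl | rfl <;> grind [sumTriple]

lemma exists_even_mem (h : IsSubspace (hexSystem K) W) (hnone : none ∈ W) (hcard : 1 < #W) :
    ∃ i x, Even i.val ∧ some (i, x) ∈ W := by
  obtain ⟨_ | ⟨i, x⟩, hx, hne⟩ := exists_mem_ne hcard none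
  · contradiction
  by_cases hi : Even i.val
  · exact ⟨i, x, hi, hx⟩
  · have hi₅ : Even (i + 5).val := (even_val_add_five i).mpr hi
    exact ⟨i + 5, x / 2, hi₅, h.half_mem hi₅ hnone (by rwa [show i + 5 + 1 = i by grind])⟩

lemma none_notMem_of_add_two (h : IsSubspace (hexSystem K) W) (hclass : MeetsClassesOnce W)
    (hx : some (i, x) ∈ W) (hy : some (i + 2, y) ∈ W) : none ∉ W := by
  by_cases hi : Even i.val
  · exact h.none_notMem_of_even hclass hi hx hy
  intro hnone
  have hi₅ : Even (i + 5).val := (even_val_add_five i).mpr hi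
  have hi₇ : Even (i + 5 + 2).val := (even_val_add_two _).mpr hi₅
  have hx' := h.half_mem hi₅ hnone (x := x) (by rwa [show i + 5 + 1 = i by grind])
  have hy' := h.half_mem hi₇ hnone (x := y) (by rwa [show i + 5 + 2 + 1 = i + 2 by grind])
  exact h.none_notMem_of_even hclass hi₅ hx' hy' hnone

lemma add_one_notMem (h : IsSubspace (hexSystem K) W) (hclass : MeetsClassesOnce W)
    (hx : some (i, x) ∈ W) (hy : some (i + 2, y) ∈ W) (z : K) : some (i + 1, z) ∉ W := by
  intro hz
  refine h.none_notMem_of_add_two hclass hx hy ?_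
  by_cases hi : Even i.val
  · exact h.none_mem_of_add_one hclass hi hx hz
  · refine h.none_mem_of_add_one hclass ((even_val_add_one i).mpr hi) hz (y := y) ?_
    rwa [show i + 1 + 1 = i + 2 by grind]

lemma subset_transversalTriple (h : IsSubspace (hexSystem K) W) (hclass : MeetsClassesOnce W)
    (hx : some (i, x) ∈ W) (hy : some (i + 2, y) ∈ W) : W ⊆ transversalTriple i x y := by
  have hz : some (i + 4, hexOffset K i - x - y) ∈ W := h.add_four_mem hx hy
  have hnot₁ (u : K) : some (i + 1, u) ∉ W := h.add_one_notMem hclass hx hy u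
  have hnot₃ (u : K) : some (i + 3, u) ∉ W := by
    rw [show i + 3 = i + 2 + 1 by grind]
    exact h.add_one_notMem hclass hy (by rwa [show i + 2 + 2 = i + 4 by grind]) u
  have hnot₅ (u : K) : some (i + 5, u) ∉ W := by
    rw [show i + 5 = i + 4 + 1 by grind]
    exact h.add_one_notMem hclass hz (by rwa [show i + 4 + 2 = i by grind]) u
  have hnone : none ∉ W := h.none_notMem_of_add_two hclass hx hy
  rintro (_ | ⟨k, u⟩) hu
  · contradiction
  · rcases zmod_six_cases i k with rfl | rfl | rfl | rfl | rfl | rfl <;>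
      grind [transversalTriple, MeetsClassesOnce]

theorem eq_univ_of_three_le_card [IsSimpleAddGroup K] (h : IsSubspace (hexSystem K) W)
    (hcard : 3 ≤ #W) (hW : W ∉ hexSystem K) : W = univ := by
  have hnot_subset (T : Finset (HexPoint K)) (hT : T ∈ hexSystem K) : ¬W ⊆ T := fun hWT =>
    hW (eq_of_subset_of_card_le hWT ((card_of_mem_hexSystem T hT).trans_le hcard) ▸ hT)
  by_contra hW_univ
  have hclass : MeetsClassesOnce W := by
    intro i x y hx hy
    by_contra hxy
    exact hnot_subset _ (sumTriple_mem_hexSystem hxy i) (h.subset_sumTriple hW_univ hxy hx hy)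
  have hparity : MeetsParitiesOnce W := hclass.meetsParitiesOnce fun i x y hx hy =>
    hnot_subset _ (transversalTriple_mem_hexSystem i x y) (h.subset_transversalTriple hclass hx hy)
  by_cases hnone : none ∈ W
  · obtain ⟨i, x, hi, hx⟩ : ∃ i x, Even i.val ∧ some (i, x) ∈ W := h.exists_even_mem hnone (by lia)
    exact hnot_subset _ (apexTriple_mem_hexSystem hi x) (h.subset_apexTriple hparity hi hnone hx)
  · have := hparity.card_le_two hnone
    lia

end IsSubspace

theorem isSpreading_hexSystem [NeZero (2 : K)] [IsSimpleAddGroup K] :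
    IsSpreading univ (hexSystem K) :=
  isSpreading_of_forall_isSubspace (fun T hT => ⟨subset_univ T, card_of_mem_hexSystem T hT⟩)
    fun _ _ h hcard hW => h.eq_univ_of_three_le_card hcard hW

end HexSystem

theorem statement_3_general (N : ℕ) :
    ∃ n : ℕ, N ≤ n ∧
      ∃ (V : Finset ℕ) (F : Finset (Finset ℕ)),
        V.card = n ∧ IsLinearTS V F ∧ IsSpreading V F ∧
        (F.card : ℝ) < 5 / 36 * (n : ℝ) ^ 2 := by
  obtain ⟨p, hp, hprime⟩ := Nat.exists_infinite_primes (N + 3)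
  have : Fact p.Prime := ⟨hprime⟩
  have : NeZero (2 : ZMod p) := ⟨Ring.two_ne_zero (by rw [ZMod.ringChar_zmod_n]; lia)⟩
  let e : HexPoint (ZMod p) ↪ ℕ := (Fintype.equivFin _).toEmbedding.trans Fin.valEmbedding
  refine ⟨6 * p + 1, by lia, univ.map e, (hexSystem (ZMod p)).map (mapEmbedding e).toEmbedding,
    by rw [card_map, card_univ, card_hexPoint, ZMod.card], isLinearTS_hexSystem.map e,
    isSpreading_hexSystem.map e, ?_⟩
  have hcard : (#(hexSystem (ZMod p)) : ℝ) ≤ 5 * p ^ 2 := by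
    exact_mod_cast ZMod.card p ▸ card_hexSystem_le (K := ZMod p)
  rw [card_map]
  push_cast
  nlinarith [p.cast_nonneg (α := ℝ)]

/-- For every `ε > 0` and every `N` there exist `n ≥ N` and a spreading
linear triple system on an `n`-element set with fewer than `(5/36 + ε) n²` triples. -/
theorem statement_3 (ε : ℝ) (hε : 0 < ε) (N : ℕ) :
    ∃ n : ℕ, N ≤ n ∧
      ∃ (V : Finset ℕ) (F : Finset (Finset ℕ)),
        V.card = n ∧ IsLinearTS V F ∧ IsSpreading V F ∧
        (F.card : ℝ) < (5 / 36 + ε) * (n : ℝ) ^ 2 := by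
  obtain ⟨n, hn, V, F, hV, hlinear, hspreading, hF⟩ := statement_3_general N
  exact ⟨n, hn, V, F, hV, hlinear, hspreading, hF.trans_le (by gcongr; linarith)⟩
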